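/- For every η > 0 there exist δ₀ > 0, σ > 0 and μ > 0 such that for all δ ∈ (0, δ₀], all ε, ε̃ ∈ [0, σ·√δ], all h ∈ Z with ‖h − Φ_LSW * Φ_LSW‖_Z ≤ μ, and i ∈ {1,2}: |G_i[h; ε, ε̃, δ] − Ĝ_i[h; δ]| ≤ η·Ĝ_i[h; δ]. -/

import Mathlib

/-!
Write `D_δ = 1 / a_δ`. Since `b_δ = 1 + D_δ'`, one has
`exp (∫_z^ξ a_δ b_δ) = D_δ(ξ) / D_δ(z) * exp (∫_z^ξ a_δ)`, so that
`G_i = ∫₀^∞ ξ h F_i` and `Ĝ_i = ∫₀¹ ξ h F̂_i`, where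
`F_i(ξ) = ∫₀^ξ γ_i(z) a_δ(z) exp (∫_z^ξ a_δ(y) (1 - ε̃ y - ε) dy) dz` and `F̂_i` is `F_i` at
`ε = ε̃ = 0` (`exp_eq`, `aF_mul_Gam`).

In the variable `w = z^(1/3)` the denominator is `(w - w₀)² (w + 2 w₀) + δ w` with `w₀³ = 1/2`
(`den_eq`). Hence:

* `D_δ ≥ ((z - 1/2)² + δ) / 128` on `[0,1]`, so `∫₀¹ a_δ = O(1/√δ)` (`int_al_le`); perturbing by
  `ε, ε̃ ≤ σ √δ` changes the exponents by `O(σ)`, and `(1 - O(σ)) F̂_i ≤ F_i ≤ F̂_i` on `[0,1]`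
  (`Fw_ge`, `Fw_le`).
* `D_δ ≥ z / 400` for `z ≥ 5/8`, so beyond `5/8`, to the right of the degenerate point `1/2`,
  `F̂_i(ξ)` is at most `C ξ^401 F̂_i(5/8)` with `C` independent of `δ` (`Fw_growth`).

The weight `F̂_i` itself becomes exponentially large in `1/√δ`, but it is nondecreasing, so
everything can be measured in units of `Q = F̂_i(5/8)`. The convolution `Φ_LSW * Φ_LSW` is
nonnegative and bounded on `[0,1]`, bounded below on `[5/8, 3/4]`, and zero on `[1,∞)`
(`conv_props`). Therefore `Ĝ_i ≥ (c - O(μ)) Q`, the difference of the integrals over `[0,1]` is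
`O(σ) Q`, and the integral over `[1,∞)` is `O(μ) Q` because `|h| ≤ μ e^(-β₁ ξ)` there
(`key_estimate`). Small `σ` and `μ` give the claim.
-/

open MeasureTheory Set Filter

/-- λ_LSW := 3 (1/2)^(2/3) -/
noncomputable def lamLSW : ℝ := 3 * (1/2 : ℝ) ^ ((2:ℝ)/3)

/-- a_δ(z) := 1/(1 + z − (λ_LSW − δ) z^(1/3)) -/
noncomputable def aF (δ z : ℝ) : ℝ := 1 / (1 + z - (lamLSW - δ) * z ^ ((1:ℝ)/3))

/-- b_δ(z) := 2 − (1/3)(λ_LSW − δ) z^(−2/3) -/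
noncomputable def bF (δ z : ℝ) : ℝ := 2 - (1/3) * (lamLSW - δ) * z ^ (-(2:ℝ)/3)

/-- ‖Φ‖_sup := sup_{0≤z≤1} |Φ(z)| -/
noncomputable def normSup (Φ : ℝ → ℝ) : ℝ := sSup ((fun z => |Φ z|) '' Icc (0:ℝ) 1)

/-- ‖Φ‖_tail := sup_{z≥1} |Φ(z)| e^{β₁ z} z^{β₂} -/
noncomputable def normTail (β₁ β₂ : ℝ) (Φ : ℝ → ℝ) : ℝ :=
  sSup ((fun z => |Φ z| * Real.exp (β₁ * z) * z ^ β₂) '' Ici (1:ℝ))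

/-- ‖Φ‖_Z := ‖Φ‖_sup + ‖Φ‖_tail -/
noncomputable def normZ (β₁ β₂ : ℝ) (Φ : ℝ → ℝ) : ℝ := normSup Φ + normTail β₁ β₂ Φ

/-- membership in the space Z: measurable with finite norm -/
def memZ (β₁ β₂ : ℝ) (Φ : ℝ → ℝ) : Prop :=
  Measurable Φ ∧ BddAbove ((fun z => |Φ z|) '' Icc (0:ℝ) 1) ∧
    BddAbove ((fun z => |Φ z| * Real.exp (β₁ * z) * z ^ β₂) '' Ici (1:ℝ))

/-- (Φ₁ * Φ₂)(z) := (1/2) ∫₀^z Φ₁(z−y) Φ₂(y) dy -/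
noncomputable def conv (Φ₁ Φ₂ : ℝ → ℝ) (z : ℝ) : ℝ :=
  (1/2) * ∫ y in (0:ℝ)..z, Φ₁ (z - y) * Φ₂ y

/-- unnormalized solution of the homogeneous ODE -/
noncomputable def psi0 (δ ε εt z : ℝ) : ℝ :=
  Real.exp (-∫ y in (0:ℝ)..z, aF δ y * (bF δ y - εt * y - ε))

/-- ψ(z; ε, ε̃, δ), normalized so that ∫₀¹ z ψ dz = 1 -/
noncomputable def psi (δ ε εt z : ℝ) : ℝ :=
  psi0 δ ε εt z / ∫ t in (0:ℝ)..1, t * psi0 δ ε εt t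

/-- the smooth LSW self-similar profile -/
noncomputable def PhiLSW (z : ℝ) : ℝ :=
  if z ≤ 1/2 then
    Real.exp (-∫ y in (0:ℝ)..z, aF 0 y * bF 0 y) /
      ∫ t in (0:ℝ)..(1/2 : ℝ), t * Real.exp (-∫ y in (0:ℝ)..t, aF 0 y * bF 0 y)
  else 0

/-- ρ_δ(ξ) := ξ a_δ(ξ) exp(−∫_ξ^1 a_δ b_δ) -/
noncomputable def rhoF (δ ξ : ℝ) : ℝ :=
  ξ * aF δ ξ * Real.exp (-∫ y in ξ..(1:ℝ), aF δ y * bF δ y)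

/-- R_δ[h] := ∫₀¹ ρ_δ(ξ) h(ξ) dξ -/
noncomputable def Rdel (δ : ℝ) (h : ℝ → ℝ) : ℝ := ∫ ξ in (0:ℝ)..1, rhoF δ ξ * h ξ

/-- R₀[h] := ∫_{1/2}^1 ξ a₀(ξ) h(ξ) exp(−∫_ξ^1 a₀ b₀) dξ -/
noncomputable def Rzero (h : ℝ → ℝ) : ℝ :=
  ∫ ξ in (1/2 : ℝ)..1, ξ * aF 0 ξ * h ξ * Real.exp (-∫ y in ξ..(1:ℝ), aF 0 y * bF 0 y)

/-- γ₁(z) = z, γ₂(z) = 1 -/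
noncomputable def gamF (i : ℕ) (z : ℝ) : ℝ := if i = 1 then z else 1

/-- Γ_i(ξ; ε, ε̃, δ) -/
noncomputable def Gam (i : ℕ) (δ ε εt ξ : ℝ) : ℝ :=
  ∫ z in (0:ℝ)..ξ, gamF i z * Real.exp (∫ y in z..ξ, aF δ y * (bF δ y - εt * y - ε))

/-- Γ̂_i(ξ; δ) := Γ_i(ξ; 0, 0, δ) -/
noncomputable def GamHat (i : ℕ) (δ ξ : ℝ) : ℝ := Gam i δ 0 0 ξ

/-- K_i^δ := Γ̂_i(1; δ) -/
noncomputable def Kc (i : ℕ) (δ : ℝ) : ℝ := GamHat i δ 1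

/-- Ĝ_i[h; δ] := ∫₀¹ ξ a_δ(ξ) h(ξ) Γ̂_i(ξ; δ) dξ -/
noncomputable def Ghat (i : ℕ) (δ : ℝ) (h : ℝ → ℝ) : ℝ :=
  ∫ ξ in (0:ℝ)..1, ξ * aF δ ξ * h ξ * GamHat i δ ξ

/-- G_i[h; ε, ε̃, δ] := ∫₀^∞ ξ a_δ(ξ) h(ξ) Γ_i(ξ; ε, ε̃, δ) dξ -/
noncomputable def Gfull (i : ℕ) (δ ε εt : ℝ) (h : ℝ → ℝ) : ℝ :=
  ∫ ξ in Ioi (0:ℝ), ξ * aF δ ξ * h ξ * Gam i δ ε εt ξ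

/-! ### The denominator of `a_δ` -/

/-- `w₀ := (1/2)^(1/3)`, the cube root of the double zero `z = 1/2` of the denominator of `a₀`. -/
noncomputable def wz : ℝ := (1/2 : ℝ) ^ ((1:ℝ)/3)

lemma wz_cube : wz ^ 3 = 1/2 := by
  unfold wz
  rw [← Real.rpow_natCast, ← Real.rpow_mul (by norm_num)]
  norm_num

lemma wz_pos : 0 < wz := by unfold wz; positivity

lemma wz_ge : 3/4 ≤ wz := by
  by_contra! h
  have := pow_lt_pow_left₀ h wz_pos.le (n := 3) (by norm_num)
  rw [wz_cube] at this
  norm_num at this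

lemma wz_le : wz ≤ 1 := by
  by_contra! h
  have := pow_lt_pow_left₀ h (by norm_num) (n := 3) (by norm_num)
  rw [wz_cube] at this
  norm_num at this

lemma lam_eq : lamLSW = 3 * wz ^ 2 := by
  unfold lamLSW wz
  rw [← Real.rpow_natCast, ← Real.rpow_mul (by norm_num)]
  norm_num

/-- The denominator `1 + z - (λ_LSW - δ) z^(1/3)` of `a_δ`. -/
noncomputable def den (δ z : ℝ) : ℝ := 1 + z - (lamLSW - δ) * z ^ ((1:ℝ)/3)

lemma aF_eq (δ z : ℝ) : aF δ z = (den δ z)⁻¹ := by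
  unfold aF den; rw [one_div]

lemma croot_cube {z : ℝ} (hz : 0 ≤ z) : (z ^ ((1:ℝ)/3)) ^ 3 = z := by
  rw [← Real.rpow_natCast, ← Real.rpow_mul hz]
  norm_num

lemma croot_nonneg {z : ℝ} (hz : 0 ≤ z) : 0 ≤ z ^ ((1:ℝ)/3) := Real.rpow_nonneg hz _

/-- In the variable `w = z^(1/3)` the denominator of `a₀` is a cubic with a double root at `w₀`. -/
lemma den_eq {z : ℝ} (δ : ℝ) (hz : 0 ≤ z) :
    den δ z = (z ^ ((1:ℝ)/3) - wz) ^ 2 * (z ^ ((1:ℝ)/3) + 2 * wz) + δ * z ^ ((1:ℝ)/3) := by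
  unfold den
  rw [lam_eq]
  have h1 := croot_cube hz
  have h2 := wz_cube
  linear_combination (-1) * h1 - 2 * h2

lemma den_pos {δ z : ℝ} (hδ : 0 < δ) (hz : 0 ≤ z) : 0 < den δ z := by
  rw [den_eq δ hz]
  have h0 := croot_nonneg hz
  have hw := wz_pos
  rcases h0.eq_or_lt with h | h
  · rw [← h, zero_sub, neg_sq]; positivity
  · positivity

lemma den_zero_pos {z : ℝ} (hz : 0 ≤ z) (hz' : z ≠ 1/2) : 0 < den 0 z := by
  rw [den_eq 0 hz]
  have h0 := croot_nonneg hz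
  have hw := wz_pos
  have : z ^ ((1:ℝ)/3) - wz ≠ 0 := by
    intro h
    apply hz'
    rw [← croot_cube hz, sub_eq_zero.1 h, wz_cube]
  positivity

/-- Uniformly in `δ`, the denominator is bounded below by a quadratic well of depth `δ`. -/
lemma den_lower {δ z : ℝ} (hδ : 0 < δ) (hδ' : δ ≤ 1) (hz : 0 ≤ z) (hz' : z ≤ 1) :
    ((z - 1/2) ^ 2 + δ) / 128 ≤ den δ z := by
  rw [den_eq δ hz]
  have h1 := croot_cube hz
  have h0 := croot_nonneg hz
  set w := z ^ ((1:ℝ)/3)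
  have hw := wz_ge
  have hw' := wz_le
  have hc := wz_cube
  have hw1 : w ≤ 1 := by
    by_contra! h
    have := pow_lt_pow_left₀ h (by norm_num) (n := 3) (by norm_num)
    rw [h1] at this
    norm_num at this; linarith
  have e : z - 1/2 = (w - wz) * (w ^ 2 + w * wz + wz ^ 2) := by
    rw [← h1, ← hc]; ring
  have k1 : (z - 1/2) ^ 2 ≤ 9 * (w - wz) ^ 2 := by
    rw [e, mul_pow]
    have h3 : w ^ 2 + w * wz + wz ^ 2 ≤ 3 := by nlinarith
    have h4 : 0 ≤ w ^ 2 + w * wz + wz ^ 2 := by positivity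
    have h5 : (w ^ 2 + w * wz + wz ^ 2) ^ 2 ≤ 9 := by nlinarith
    nlinarith [mul_le_mul_of_nonneg_left h5 (sq_nonneg (w - wz))]
  have k2 : (w - wz) ^ 2 ≤ (w - wz) ^ 2 * (w + 2 * wz) := by
    nlinarith [sq_nonneg (w - wz)]
  have k3 : 0 ≤ δ * w := by positivity
  by_cases hs : z ≤ 1/8
  · nlinarith
  · have : 1/2 ≤ w := by
      by_contra! h
      have := pow_lt_pow_left₀ h h0 (n := 3) (by norm_num)
      rw [h1] at this
      norm_num at this; linarith
    nlinarith

lemma den_ge {δ z : ℝ} (hδ : 0 ≤ δ) (hz : 5/8 ≤ z) : z / 400 ≤ den δ z := by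
  have hz0 : 0 ≤ z := by linarith
  rw [den_eq δ hz0]
  have h1 := croot_cube hz0
  have h0 := croot_nonneg hz0
  set w := z ^ ((1:ℝ)/3)
  have hw := wz_pos
  have k : wz ≤ 19/20 * w := by
    by_contra! h
    have := pow_lt_pow_left₀ h (by positivity) (n := 3) (by norm_num)
    rw [wz_cube, mul_pow, h1] at this
    norm_num at this; linarith
  have k2 : w ^ 2 / 400 ≤ (w - wz) ^ 2 := by nlinarith
  have k3 : 0 ≤ δ * w := by positivity
  have k4 : w ^ 2 / 400 * w ≤ (w - wz) ^ 2 * (w + 2 * wz) := by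
    apply mul_le_mul k2 (by linarith) h0 (by positivity)
  calc z / 400 = w ^ 2 / 400 * w := by rw [← h1]; ring
    _ ≤ _ := by linarith

lemma one_le_lam : 1 ≤ lamLSW := by rw [lam_eq]; nlinarith [wz_ge]

lemma den_le {δ z : ℝ} (hδ' : δ ≤ 1) (hz : 0 ≤ z) (hz' : z ≤ 1) : den δ z ≤ 2 := by
  unfold den
  have := mul_nonneg (by linarith [one_le_lam] : 0 ≤ lamLSW - δ) (croot_nonneg hz)
  linarith

lemma den_continuous (δ : ℝ) : Continuous (den δ) := by
  unfold den
  have : Continuous fun z : ℝ => z ^ ((1:ℝ)/3) := Real.continuous_rpow_const (by norm_num)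
  fun_prop

lemma den_hasDerivAt (δ : ℝ) {z : ℝ} (hz : 0 < z) : HasDerivAt (den δ) (bF δ z - 1) z := by
  unfold den bF
  have h := (Real.hasDerivAt_rpow_const (x := z) (p := (1:ℝ)/3) (Or.inl hz.ne')).const_mul
    (lamLSW - δ)
  have h2 := ((hasDerivAt_id z).const_add 1).sub h
  refine h2.congr_deriv ?_
  norm_num
  ring

lemma bF_intervalIntegrable (δ u v : ℝ) : IntervalIntegrable (bF δ) volume u v := by
  unfold bF
  have := (intervalIntegral.intervalIntegrable_rpow' (a := u) (b := v) (r := -(2:ℝ)/3)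
    (by norm_num)).const_mul ((1/3) * (lamLSW - δ))
  exact intervalIntegrable_const.sub this

/-! ### Removing `b_δ` from the exponent -/

/-- `a_δ` composed with `max · 0`; for `δ > 0` it is continuous and positive on all of `ℝ`
and agrees with `a_δ` on `[0, ∞)`. -/
noncomputable def al (δ z : ℝ) : ℝ := (den δ (max z 0))⁻¹

lemma al_eq {z : ℝ} (δ : ℝ) (hz : 0 ≤ z) : al δ z = (den δ z)⁻¹ := by
  unfold al; rw [max_eq_left hz]

lemma al_pos {δ : ℝ} (hδ : 0 < δ) (z : ℝ) : 0 < al δ z :=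
  inv_pos.2 (den_pos hδ (le_max_right _ _))

lemma al_continuous {δ : ℝ} (hδ : 0 < δ) : Continuous (al δ) := by
  unfold al
  exact ((den_continuous δ).comp (by fun_prop)).inv₀ fun z => (den_pos hδ (le_max_right _ _)).ne'

/-- The exponent `∫_z^ξ a_δ(y) (1 - ε̃ y - ε) dy` remaining after the logarithmic derivative
of the denominator has been integrated. -/
noncomputable def Aint (δ ε εt z ξ : ℝ) : ℝ := ∫ y in z..ξ, al δ y * (1 - εt * y - ε)

/-- Since `b_δ = 1 + D'` with `D = 1 / a_δ`, the weight `exp ∫ a_δ b_δ` factors through `D`. -/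
lemma exp_eq {δ : ℝ} (hδ : 0 < δ) (ε εt : ℝ) {z ξ : ℝ} (hz : 0 ≤ z) (hξ : z ≤ ξ) :
    Real.exp (∫ y in z..ξ, aF δ y * (bF δ y - εt * y - ε)) =
      den δ ξ * (al δ z * Real.exp (Aint δ ε εt z ξ)) := by
  have hpos : ∀ y ∈ Icc z ξ, 0 < den δ y := fun y hy => den_pos hδ (hz.trans hy.1)
  have hfi : IntervalIntegrable (fun y => al δ y * (bF δ y - 1)) volume z ξ :=
    ((bF_intervalIntegrable δ z ξ).sub intervalIntegrable_const).continuousOn_mul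
      (al_continuous hδ).continuousOn
  have h1 : ∫ y in z..ξ, al δ y * (bF δ y - 1) =
      Real.log (den δ ξ) - Real.log (den δ z) := by
    refine intervalIntegral.integral_eq_sub_of_hasDerivAt_of_le hξ ?_ ?_ hfi
      (f := fun y => Real.log (den δ y))
    · exact (den_continuous δ).continuousOn.log fun y hy => (hpos y hy).ne'
    · intro y hy
      have hy0 : 0 < y := hz.trans_lt hy.1
      have := (den_hasDerivAt δ hy0).log (hpos y ⟨hy.1.le, hy.2.le⟩).ne'
      refine this.congr_deriv ?_
      rw [al_eq δ hy0.le]; field_simp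
  have h2 : ∫ y in z..ξ, aF δ y * (bF δ y - εt * y - ε) =
      (∫ y in z..ξ, al δ y * (bF δ y - 1)) + Aint δ ε εt z ξ := by
    unfold Aint
    rw [← intervalIntegral.integral_add hfi]
    · apply intervalIntegral.integral_congr
      intro y hy
      rw [uIcc_of_le hξ] at hy
      simp only
      rw [aF_eq, al_eq δ (hz.trans hy.1)]; ring
    · have := al_continuous hδ
      exact Continuous.intervalIntegrable (by fun_prop) _ _
  rw [h2, h1, Real.exp_add, Real.exp_sub, Real.exp_log (hpos _ ⟨hξ, le_rfl⟩),
    Real.exp_log (hpos _ ⟨le_rfl, hξ⟩), al_eq δ hz]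
  ring

/-- The weight `F_i` against which `ξ h(ξ)` is integrated: it equals `a_δ Γ_i` on `[0, ∞)`
(`aF_mul_Gam`), written with `b_δ` integrated out so that no singular exponent remains. -/
noncomputable def Fw (i : ℕ) (δ ε εt ξ : ℝ) : ℝ :=
  ∫ z in (0:ℝ)..ξ, gamF i z * al δ z * Real.exp (Aint δ ε εt z ξ)

lemma aF_mul_Gam {δ : ℝ} (hδ : 0 < δ) (i : ℕ) (ε εt : ℝ) {ξ : ℝ} (hξ : 0 ≤ ξ) :
    aF δ ξ * Gam i δ ε εt ξ = Fw i δ ε εt ξ := by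
  unfold Gam Fw
  rw [← intervalIntegral.integral_const_mul]
  apply intervalIntegral.integral_congr
  intro z hz
  rw [uIcc_of_le hξ] at hz
  simp only
  rw [exp_eq hδ ε εt hz.1 hz.2, aF_eq]
  have := (den_pos hδ hξ).ne'
  field_simp

lemma gamF_continuous (i : ℕ) : Continuous (gamF i) := by
  unfold gamF
  split_ifs <;> fun_prop

lemma gamF_nonneg (i : ℕ) {z : ℝ} (hz : 0 ≤ z) : 0 ≤ gamF i z := by
  unfold gamF
  split_ifs <;> linarith

lemma Aint_integrable {δ : ℝ} (hδ : 0 < δ) (ε εt u v : ℝ) :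
    IntervalIntegrable (fun y => al δ y * (1 - εt * y - ε)) volume u v := by
  have := al_continuous hδ
  exact Continuous.intervalIntegrable (by fun_prop) _ _

lemma Aint_split {δ : ℝ} (hδ : 0 < δ) (ε εt z s ξ : ℝ) :
    Aint δ ε εt z ξ = Aint δ ε εt z s + Aint δ ε εt s ξ :=
  (intervalIntegral.integral_add_adjacent_intervals (Aint_integrable hδ _ _ _ _)
    (Aint_integrable hδ _ _ _ _)).symm

lemma Aint_cont_right {δ : ℝ} (hδ : 0 < δ) (ε εt z : ℝ) :
    Continuous fun ξ => Aint δ ε εt z ξ :=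
  intervalIntegral.continuous_primitive (Aint_integrable hδ ε εt) z

lemma Aint_cont_left {δ : ℝ} (hδ : 0 < δ) (ε εt ξ : ℝ) :
    Continuous fun z => Aint δ ε εt z ξ := by
  have : (fun z => Aint δ ε εt z ξ) = fun z => - Aint δ ε εt ξ z := by
    funext z; exact intervalIntegral.integral_symm _ _
  rw [this]; exact (Aint_cont_right hδ ε εt ξ).neg

lemma Fw_integrand_cont {δ : ℝ} (hδ : 0 < δ) (i : ℕ) (ε εt ξ : ℝ) :
    Continuous fun z => gamF i z * al δ z * Real.exp (Aint δ ε εt z ξ) :=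
  ((gamF_continuous i).mul (al_continuous hδ)).mul (Aint_cont_left hδ ε εt ξ).rexp

lemma Fw_split {δ : ℝ} (hδ : 0 < δ) (i : ℕ) (ε εt s ξ : ℝ) :
    Fw i δ ε εt ξ = Real.exp (Aint δ ε εt s ξ) * Fw i δ ε εt s +
      ∫ z in s..ξ, gamF i z * al δ z * Real.exp (Aint δ ε εt z ξ) := by
  unfold Fw
  rw [← intervalIntegral.integral_const_mul,
    ← intervalIntegral.integral_add_adjacent_intervals
      ((Fw_integrand_cont hδ i ε εt ξ).intervalIntegrable 0 s)
      ((Fw_integrand_cont hδ i ε εt ξ).intervalIntegrable s ξ)]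
  congr 1
  apply intervalIntegral.integral_congr
  intro z _
  simp only
  rw [Aint_split hδ ε εt z s ξ, Real.exp_add]; ring

lemma Fw_continuous {δ : ℝ} (hδ : 0 < δ) (i : ℕ) (ε εt : ℝ) :
    Continuous (Fw i δ ε εt) := by
  have : Fw i δ ε εt = fun ξ => Real.exp (Aint δ ε εt 0 ξ) *
      ∫ z in (0:ℝ)..ξ, gamF i z * al δ z * Real.exp (Aint δ ε εt z 0) := by
    funext ξ
    unfold Fw
    rw [← intervalIntegral.integral_const_mul]
    apply intervalIntegral.integral_congr
    intro z _
    simp only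
    rw [Aint_split hδ ε εt z 0 ξ, Real.exp_add]; ring
  rw [this]
  exact (Aint_cont_right hδ ε εt 0).rexp.mul (intervalIntegral.continuous_primitive
    (fun a b => (Fw_integrand_cont hδ i ε εt 0).intervalIntegrable a b) 0)

/-! ### Perturbation, monotonicity and growth of the weights -/

lemma al_integrable {δ : ℝ} (hδ : 0 < δ) (u v : ℝ) : IntervalIntegrable (al δ) volume u v :=
  (al_continuous hδ).intervalIntegrable _ _

/-- The mass of `a_δ` on `[0,1]` is `O(1/√δ)`; this is why perturbations of size `σ √δ` only
change the exponents by `O(σ)`. -/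
lemma int_al_le {δ z ξ : ℝ} (hδ : 0 < δ) (hδ' : δ ≤ 1) (hz : 0 ≤ z) (hzξ : z ≤ ξ) (hξ : ξ ≤ 1) :
    ∫ y in z..ξ, al δ y ≤ 128 * Real.pi / Real.sqrt δ := by
  set r := Real.sqrt δ with hr
  have hr0 : 0 < r := Real.sqrt_pos.2 hδ
  have hr2 : r ^ 2 = δ := Real.sq_sqrt hδ.le
  have hpos : ∀ y : ℝ, 0 < (y - 1/2) ^ 2 + δ := fun y => by positivity
  have hcont : Continuous fun y : ℝ => 128 * ((y - 1/2) ^ 2 + δ)⁻¹ :=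
    continuous_const.mul (Continuous.inv₀ (by fun_prop) fun y => (hpos y).ne')
  calc ∫ y in z..ξ, al δ y ≤ ∫ y in z..ξ, 128 * ((y - 1/2) ^ 2 + δ)⁻¹ := by
        apply intervalIntegral.integral_mono_on hzξ (al_integrable hδ _ _)
          (hcont.intervalIntegrable _ _)
        intro y hy
        have hy0 := hz.trans hy.1
        rw [al_eq δ hy0]
        have h := den_lower hδ hδ' hy0 (hy.2.trans hξ)
        calc (den δ y)⁻¹ ≤ (((y - 1/2) ^ 2 + δ) / 128)⁻¹ :=
              inv_anti₀ (by have := hpos y; positivity) h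
          _ = _ := by rw [inv_div, div_eq_mul_inv]
    _ = 128 / r * Real.arctan ((ξ - 1/2) / r) - 128 / r * Real.arctan ((z - 1/2) / r) := by
        apply intervalIntegral.integral_eq_sub_of_hasDerivAt
          (f := fun y => 128 / r * Real.arctan ((y - 1/2) / r)) _ (hcont.intervalIntegrable _ _)
        intro y _
        have h1 : HasDerivAt (fun y : ℝ => (y - 1/2) / r) (1 / r) y :=
          ((hasDerivAt_id y).sub_const (1/2)).div_const r
        refine (h1.arctan.const_mul (128 / r)).congr_deriv ?_
        have := hpos y
        rw [← hr2] at this ⊢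
        have h2 : 0 < 1 + ((y - 1/2) / r) ^ 2 := by positivity
        field_simp
        ring
    _ ≤ 128 * Real.pi / r := by
        have h1 := Real.arctan_lt_pi_div_two ((ξ - 1/2) / r)
        have h2 := Real.neg_pi_div_two_lt_arctan ((z - 1/2) / r)
        rw [← mul_sub, mul_div_right_comm]
        apply mul_le_mul_of_nonneg_left _ (by positivity)
        linarith

lemma Fw_nonneg {δ : ℝ} (hδ : 0 < δ) (i : ℕ) (ε εt : ℝ) {ξ : ℝ} (hξ : 0 ≤ ξ) :
    0 ≤ Fw i δ ε εt ξ :=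
  intervalIntegral.integral_nonneg hξ fun z hz =>
    mul_nonneg (mul_nonneg (gamF_nonneg i hz.1) (al_pos hδ z).le) (Real.exp_pos _).le

lemma Aint_le {δ ε εt z ξ : ℝ} (hδ : 0 < δ) (hε : 0 ≤ ε) (hεt : 0 ≤ εt) (hz : 0 ≤ z)
    (hzξ : z ≤ ξ) : Aint δ ε εt z ξ ≤ Aint δ 0 0 z ξ := by
  apply intervalIntegral.integral_mono_on hzξ (Aint_integrable hδ _ _ _ _)
    (Aint_integrable hδ _ _ _ _)
  intro y hy
  apply mul_le_mul_of_nonneg_left _ (al_pos hδ y).le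
  have := mul_nonneg hεt (hz.trans hy.1)
  linarith

lemma Fw_le {δ ε εt ξ : ℝ} (hδ : 0 < δ) (i : ℕ) (hε : 0 ≤ ε) (hεt : 0 ≤ εt) (hξ : 0 ≤ ξ) :
    Fw i δ ε εt ξ ≤ Fw i δ 0 0 ξ := by
  apply intervalIntegral.integral_mono_on hξ
    ((Fw_integrand_cont hδ i _ _ ξ).intervalIntegrable _ _)
    ((Fw_integrand_cont hδ i _ _ ξ).intervalIntegrable _ _)
  intro z hz
  apply mul_le_mul_of_nonneg_left _ (mul_nonneg (gamF_nonneg i hz.1) (al_pos hδ z).le)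
  exact Real.exp_le_exp.2 (Aint_le hδ hε hεt hz.1 hz.2)

lemma Aint_ge {δ ε εt σ z ξ : ℝ} (hδ : 0 < δ) (hδ' : δ ≤ 1)
    (hε : ε ∈ Icc (0:ℝ) (σ * Real.sqrt δ)) (hεt : εt ∈ Icc (0:ℝ) (σ * Real.sqrt δ))
    (hz : 0 ≤ z) (hzξ : z ≤ ξ) (hξ : ξ ≤ 1) :
    Aint δ 0 0 z ξ - 256 * Real.pi * σ ≤ Aint δ ε εt z ξ := by
  have hr0 : 0 < Real.sqrt δ := Real.sqrt_pos.2 hδ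
  have hσ : 0 ≤ σ := by
    have := hε.1.trans hε.2
    by_contra! h
    nlinarith
  have h1 : Aint δ 0 0 z ξ - 2 * (σ * Real.sqrt δ) * ∫ y in z..ξ, al δ y ≤ Aint δ ε εt z ξ := by
    unfold Aint
    rw [← intervalIntegral.integral_const_mul, ← intervalIntegral.integral_sub
      (Aint_integrable hδ _ _ _ _) ((al_integrable hδ _ _).const_mul _)]
    apply intervalIntegral.integral_mono_on hzξ
      ((Aint_integrable hδ _ _ _ _).sub ((al_integrable hδ _ _).const_mul _))
      (Aint_integrable hδ _ _ _ _)
    intro y hy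
    have hy0 := hz.trans hy.1
    have hy1 := hy.2.trans hξ
    have h2 : εt * y ≤ σ * Real.sqrt δ := by nlinarith [hεt.1, hεt.2]
    have := mul_le_mul_of_nonneg_left
      (by linarith [hε.2] : εt * y + ε ≤ 2 * (σ * Real.sqrt δ)) (al_pos hδ y).le
    nlinarith
  have h2 := mul_le_mul_of_nonneg_left (int_al_le hδ hδ' hz hzξ hξ)
    (by positivity : 0 ≤ 2 * (σ * Real.sqrt δ))
  have h3 : 2 * (σ * Real.sqrt δ) * (128 * Real.pi / Real.sqrt δ) = 256 * Real.pi * σ := by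
    field_simp; ring
  linarith

/-- On `[0,1]` the perturbed weight is within a relative error `256 π σ` of the unperturbed one. -/
lemma Fw_ge {δ ε εt σ ξ : ℝ} (hδ : 0 < δ) (hδ' : δ ≤ 1) (i : ℕ)
    (hε : ε ∈ Icc (0:ℝ) (σ * Real.sqrt δ)) (hεt : εt ∈ Icc (0:ℝ) (σ * Real.sqrt δ))
    (hξ0 : 0 ≤ ξ) (hξ : ξ ≤ 1) :
    (1 - 256 * Real.pi * σ) * Fw i δ 0 0 ξ ≤ Fw i δ ε εt ξ := by
  unfold Fw
  rw [← intervalIntegral.integral_const_mul]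
  apply intervalIntegral.integral_mono_on hξ0
    (((Fw_integrand_cont hδ i _ _ ξ).intervalIntegrable _ _).const_mul _)
    ((Fw_integrand_cont hδ i _ _ ξ).intervalIntegrable _ _)
  intro z hz
  have h := Real.exp_le_exp.2 (Aint_ge hδ hδ' hε hεt hz.1 hz.2 hξ)
  rw [sub_eq_add_neg, Real.exp_add] at h
  have h2 := Real.add_one_le_exp (-(256 * Real.pi * σ))
  have h3 : (1 - 256 * Real.pi * σ) * Real.exp (Aint δ 0 0 z ξ) ≤ Real.exp (Aint δ ε εt z ξ) := by
    nlinarith [Real.exp_pos (Aint δ 0 0 z ξ)]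
  have := mul_le_mul_of_nonneg_left h3 (mul_nonneg (gamF_nonneg i hz.1) (al_pos hδ z).le)
  linarith

lemma Aint_zero_nonneg {δ z ξ : ℝ} (hδ : 0 < δ) (hzξ : z ≤ ξ) : 0 ≤ Aint δ 0 0 z ξ :=
  intervalIntegral.integral_nonneg hzξ fun y _ => by
    have := al_pos hδ y
    simp [this.le]

lemma Fw_mono {δ s ξ : ℝ} (hδ : 0 < δ) (i : ℕ) (hs : 0 ≤ s) (hsξ : s ≤ ξ) :
    Fw i δ 0 0 s ≤ Fw i δ 0 0 ξ := by
  rw [Fw_split hδ i 0 0 s ξ]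
  have h1 : 0 ≤ ∫ z in s..ξ, gamF i z * al δ z * Real.exp (Aint δ 0 0 z ξ) :=
    intervalIntegral.integral_nonneg hsξ fun z hz => mul_nonneg
      (mul_nonneg (gamF_nonneg i (hs.trans hz.1)) (al_pos hδ z).le) (Real.exp_pos _).le
  have h2 := Real.one_le_exp (Aint_zero_nonneg hδ hsξ)
  nlinarith [Fw_nonneg hδ i 0 0 hs]

lemma Fw_base_ge {δ : ℝ} (hδ : 0 < δ) (hδ' : δ ≤ 1) (i : ℕ) : 1/16 ≤ Fw i δ 0 0 (5/8) := by
  have h : ∫ z in (0:ℝ)..(5/8), z * (1/2) ≤ Fw i δ 0 0 (5/8) := by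
    apply intervalIntegral.integral_mono_on (by norm_num)
      (Continuous.intervalIntegrable (by fun_prop) _ _)
      ((Fw_integrand_cont hδ i _ _ _).intervalIntegrable _ _)
    intro z hz
    have hz1 : z ≤ 1 := by linarith [hz.2]
    have h1 : z ≤ gamF i z := by unfold gamF; split_ifs <;> linarith
    have h2 : 1/2 ≤ al δ z := by
      rw [al_eq δ hz.1, one_div]
      exact inv_anti₀ (den_pos hδ hz.1) (den_le hδ' hz.1 hz1)
    have h3 := Real.one_le_exp (Aint_zero_nonneg hδ hz.2)
    have h4 : z * (1/2) ≤ gamF i z * al δ z :=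
      mul_le_mul h1 h2 (by norm_num) (gamF_nonneg i hz.1)
    have h5 : 0 ≤ gamF i z * al δ z := mul_nonneg (gamF_nonneg i hz.1) (al_pos hδ z).le
    nlinarith
  refine le_trans ?_ h
  rw [intervalIntegral.integral_mul_const, integral_id]
  norm_num

lemma al_le_inv {δ z : ℝ} (hδ : 0 < δ) (hz : 5/8 ≤ z) : al δ z ≤ 400 * z⁻¹ := by
  rw [al_eq δ (by linarith)]
  have := inv_anti₀ (by linarith) (den_ge hδ.le hz)
  rwa [inv_div, div_eq_mul_inv] at this

lemma exp_Aint_le {δ z ξ : ℝ} (hδ : 0 < δ) (hz : 5/8 ≤ z) (hzξ : z ≤ ξ) :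
    Real.exp (Aint δ 0 0 z ξ) ≤ (ξ / z) ^ (400:ℝ) := by
  have hz0 : 0 < z := by linarith
  have hξ0 : 0 < ξ := by linarith
  have h : Aint δ 0 0 z ξ ≤ 400 * Real.log (ξ / z) := by
    rw [← integral_inv_of_pos hz0 hξ0, ← intervalIntegral.integral_const_mul]
    apply intervalIntegral.integral_mono_on hzξ (Aint_integrable hδ _ _ _ _)
    · apply ContinuousOn.intervalIntegrable
      rw [uIcc_of_le hzξ]
      exact continuousOn_const.mul (continuousOn_id.inv₀ fun y hy => (hz0.trans_le hy.1).ne')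
    · intro y hy
      have := al_le_inv hδ (hz.trans hy.1)
      simpa using this
  calc _ ≤ Real.exp (400 * Real.log (ξ / z)) := Real.exp_le_exp.2 h
    _ = _ := by
      rw [Real.rpow_def_of_pos (by positivity), mul_comm]

/-- To the right of the degenerate point `1/2` the weight grows at most polynomially,
with constants independent of `δ`. -/
lemma Fw_growth {δ ξ : ℝ} (hδ : 0 < δ) (hδ' : δ ≤ 1) (i : ℕ) (hξ : 5/8 ≤ ξ) :
    Fw i δ 0 0 ξ ≤ 20000 * (8/5) ^ (400:ℝ) * ξ ^ (401:ℝ) * Fw i δ 0 0 (5/8) := by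
  have hξ0 : 0 < ξ := by linarith
  have hQ := Fw_base_ge hδ hδ' i
  set Q := Fw i δ 0 0 (5/8)
  have hr : (8/5 : ℝ) ^ (400:ℝ) * ξ ^ (400:ℝ) = (ξ / (5/8)) ^ (400:ℝ) := by
    rw [← Real.mul_rpow (by norm_num) hξ0.le]; congr 1; ring
  have hr' : (8/5 : ℝ) ^ (400:ℝ) * ξ ^ (401:ℝ) = (ξ / (5/8)) ^ (400:ℝ) * ξ := by
    rw [← hr, mul_assoc, ← Real.rpow_add_one hξ0.ne']; norm_num
  set E := (ξ / (5/8)) ^ (400:ℝ) with hE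
  have hE0 : 0 < E := by positivity
  have h1 : ∫ z in (5/8:ℝ)..ξ, gamF i z * al δ z * Real.exp (Aint δ 0 0 z ξ) ≤
      ∫ z in (5/8:ℝ)..ξ, 640 * E := by
    apply intervalIntegral.integral_mono_on hξ
      ((Fw_integrand_cont hδ i _ _ _).intervalIntegrable _ _) intervalIntegrable_const
    intro z hz
    have hz0 : 0 < z := by linarith [hz.1]
    have k1 : gamF i z * al δ z ≤ 640 := by
      have e1 := al_le_inv hδ hz.1
      have e2 : z⁻¹ ≤ 8/5 := by
        have := inv_anti₀ (by norm_num) hz.1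
        rwa [inv_div] at this
      have e3 := (al_pos hδ z).le
      unfold gamF
      split_ifs
      · calc z * al δ z ≤ z * (400 * z⁻¹) := by gcongr
          _ = 400 := by field_simp
          _ ≤ 640 := by norm_num
      · linarith
    have k2 : Real.exp (Aint δ 0 0 z ξ) ≤ E := by
      refine (exp_Aint_le hδ hz.1 hz.2).trans ?_
      apply Real.rpow_le_rpow (by positivity) _ (by norm_num)
      exact div_le_div_of_nonneg_left hξ0.le (by norm_num) hz.1
    exact mul_le_mul k1 k2 (Real.exp_pos _).le (by norm_num)
  rw [intervalIntegral.integral_const, smul_eq_mul] at h1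
  have h2 : Real.exp (Aint δ 0 0 (5/8) ξ) ≤ E := exp_Aint_le hδ le_rfl hξ
  rw [Fw_split hδ i 0 0 (5/8) ξ, mul_assoc 20000, hr']
  have h3 : Real.exp (Aint δ 0 0 (5/8) ξ) * Q ≤ E * Q :=
    mul_le_mul_of_nonneg_right h2 (by linarith)
  have h4 : E * Q ≤ E * Q * (2 * ξ) := le_mul_of_one_le_right (by positivity) (by linarith)
  have h5 : (ξ - 5/8) * (640 * E) ≤ ξ * (640 * E) * (16 * Q) := by
    refine le_trans ?_ (le_mul_of_one_le_right (by positivity) (by linarith))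
    gcongr; linarith
  have h6 : 0 ≤ E * ξ * Q := by positivity
  nlinarith

/-! ### The LSW profile and its self-convolution -/

lemma intervalIntegrable_of_bdd {f : ℝ → ℝ} (hf : Measurable f) {u v C : ℝ} (huv : u ≤ v)
    (hb : ∀ x ∈ Icc u v, |f x| ≤ C) : IntervalIntegrable f volume u v := by
  rw [intervalIntegrable_iff_integrableOn_Icc_of_le huv]
  refine Measure.integrableOn_of_bounded (M := C) (by simp) hf.aestronglyMeasurable ?_
  exact (ae_restrict_iff' measurableSet_Icc).2 (Eventually.of_forall fun x hx => hb x hx)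

/-- The unnormalized LSW profile `exp (-∫₀^z a₀ b₀)`, to be used on `[0, 1/2)`. -/
noncomputable def lswP (z : ℝ) : ℝ := Real.exp (-∫ y in (0:ℝ)..z, aF 0 y * bF 0 y)

lemma lswP_pos (z : ℝ) : 0 < lswP z := Real.exp_pos _

lemma ab_intervalIntegrable {u v : ℝ} (hu : 0 ≤ u) (huv : u ≤ v) (hv : v < 1/2) :
    IntervalIntegrable (fun y => aF 0 y * bF 0 y) volume u v := by
  apply (bF_intervalIntegrable 0 u v).continuousOn_mul
  rw [uIcc_of_le huv]
  have : aF 0 = fun y => (den 0 y)⁻¹ := funext fun y => aF_eq 0 y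
  rw [this]
  exact (den_continuous 0).continuousOn.inv₀ fun y hy =>
    (den_zero_pos (hu.trans hy.1) (by linarith [hy.2])).ne'

lemma lswP_continuousOn_Icc {t : ℝ} (ht : 0 ≤ t) (ht' : t < 1/2) :
    ContinuousOn lswP (Icc 0 t) := by
  have h := ab_intervalIntegrable le_rfl ht ht'
  have h2 := intervalIntegral.continuousOn_primitive_interval' h left_mem_uIcc
  rw [uIcc_of_le ht] at h2
  exact h2.neg.rexp

lemma lswP_continuousOn : ContinuousOn lswP (Ico 0 (1/2)) := by
  intro x hx
  have hx2 := hx.2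
  have hx1 := hx.1
  have h := lswP_continuousOn_Icc (t := (x + 1/2) / 2) (by linarith) (by linarith)
  refine (h x ⟨hx.1, by linarith⟩).mono_of_mem_nhdsWithin ?_
  filter_upwards [self_mem_nhdsWithin,
    nhdsWithin_le_nhds (Iio_mem_nhds (by linarith : x < (x + 1/2) / 2))] with y hy hy'
  exact ⟨hy.1, le_of_lt hy'⟩

lemma bF_zero_nonneg {y : ℝ} (hy : 1/4 ≤ y) : 0 ≤ bF 0 y := by
  have h1 : y ^ (-(2:ℝ)/3) ≤ (1/4 : ℝ) ^ (-(2:ℝ)/3) :=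
    Real.rpow_le_rpow_of_nonpos (by norm_num) hy (by norm_num)
  have h2 : (1/4 : ℝ) ^ (-(2:ℝ)/3) = (1/2 : ℝ) ^ (-(4:ℝ)/3) := by
    rw [show (1/4 : ℝ) = (1/2 : ℝ) ^ (2:ℝ) by norm_num, ← Real.rpow_mul (by norm_num)]
    norm_num
  have h3 : (1/2 : ℝ) ^ ((2:ℝ)/3) * (1/2 : ℝ) ^ (-(4:ℝ)/3) ≤ 2 := by
    rw [← Real.rpow_add (by norm_num)]
    calc (1/2 : ℝ) ^ ((2:ℝ)/3 + -(4:ℝ)/3) ≤ (1/2 : ℝ) ^ (-1:ℝ) :=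
          Real.rpow_le_rpow_of_exponent_ge (by norm_num) (by norm_num) (by norm_num)
      _ = 2 := by rw [Real.rpow_neg_one]; norm_num
  have h4 : (0:ℝ) ≤ (1/2 : ℝ) ^ ((2:ℝ)/3) := by positivity
  have h5 := mul_le_mul_of_nonneg_left h1 h4
  rw [h2] at h5
  unfold bF lamLSW
  linarith

/-- `lswP` is bounded up to the singular point `1/2` because `a₀ b₀ ≥ 0` on `[1/4, 1/2)`. -/
lemma lswP_bdd : ∃ B, ∀ z ∈ Icc (0:ℝ) (1/2), lswP z ≤ B := by
  obtain ⟨B, hB⟩ := isCompact_Icc.exists_bound_of_continuousOn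
    (lswP_continuousOn_Icc (t := 1/4) (by norm_num) (by norm_num))
  have hB' : ∀ z ∈ Icc (0:ℝ) (1/4), lswP z ≤ B := fun z hz => (le_abs_self _).trans (hB z hz)
  refine ⟨max B (lswP (1/2)), fun z hz => ?_⟩
  rcases hz.2.eq_or_lt with h | h
  · rw [h]; exact le_max_right _ _
  refine le_trans ?_ (le_max_left _ _)
  by_cases h4 : z ≤ 1/4
  · exact hB' z ⟨hz.1, h4⟩
  · push Not at h4
    refine le_trans ?_ (hB' (1/4) (by norm_num))
    apply Real.exp_le_exp.2
    have hs := intervalIntegral.integral_add_adjacent_intervals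
      (ab_intervalIntegrable (u := 0) (v := 1/4) le_rfl (by norm_num) (by norm_num))
      (ab_intervalIntegrable (u := 1/4) (v := z) (by norm_num) h4.le h)
    have hn : 0 ≤ ∫ y in (1/4:ℝ)..z, aF 0 y * bF 0 y := by
      apply intervalIntegral.integral_nonneg h4.le
      intro y hy
      apply mul_nonneg _ (bF_zero_nonneg hy.1)
      rw [aF_eq]
      exact (inv_pos.2 (den_zero_pos (by linarith [hy.1]) (by linarith [hy.2]))).le
    linarith

/-- `lswP` extended by zero outside `[0, 1/2]`. -/
noncomputable def lswU (z : ℝ) : ℝ := (Icc (0:ℝ) (1/2)).indicator lswP z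

lemma lswU_measurable : Measurable lswU := by
  have h1 : Measurable ((Ico (0:ℝ) (1/2)).indicator lswP) := by
    rw [← piecewise_eq_indicator]
    exact lswP_continuousOn.measurable_piecewise continuousOn_const measurableSet_Ico
  have h2 : Measurable (({1/2} : Set ℝ).indicator fun _ => lswP (1/2)) :=
    measurable_const.indicator (measurableSet_singleton _)
  have : lswU = fun z => (Ico (0:ℝ) (1/2)).indicator lswP z +
      ({1/2} : Set ℝ).indicator (fun _ => lswP (1/2)) z := by
    funext z
    unfold lswU
    by_cases hz : z = 1/2
    · subst hz; simp
    · have : z ∈ Icc (0:ℝ) (1/2) ↔ z ∈ Ico (0:ℝ) (1/2) :=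
        ⟨fun h => ⟨h.1, lt_of_le_of_ne h.2 hz⟩, fun h => ⟨h.1, h.2.le⟩⟩
      have hz' : z ∉ ({1/2} : Set ℝ) := hz
      rw [indicator_of_notMem hz', add_zero]
      by_cases h : z ∈ Ico (0:ℝ) (1/2)
      · rw [indicator_of_mem h, indicator_of_mem (this.2 h)]
      · rw [indicator_of_notMem h, indicator_of_notMem (fun h' => h (this.1 h'))]
  rw [this]; exact h1.add h2

lemma lswU_nonneg (z : ℝ) : 0 ≤ lswU z := indicator_nonneg (fun z _ => (lswP_pos z).le) z

/-- The normalizing integral `∫₀^{1/2} t exp (-∫₀^t a₀ b₀) dt` of the LSW profile. -/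
noncomputable def lswN : ℝ :=
  ∫ t in (0:ℝ)..(1/2 : ℝ), t * Real.exp (-∫ y in (0:ℝ)..t, aF 0 y * bF 0 y)

lemma lswU_bdd : ∃ B, 0 ≤ B ∧ ∀ z, lswU z ≤ B := by
  obtain ⟨B, hB⟩ := lswP_bdd
  have hB0 : 0 ≤ B := (lswP_pos 0).le.trans (hB 0 (by norm_num))
  exact ⟨B, hB0, fun z => indicator_le' (f := lswP) (g := fun _ => B) (fun z hz => hB z hz)
    (fun _ _ => hB0) z⟩

lemma lswN_pos : 0 < lswN := by
  have e : lswN = ∫ t in (0:ℝ)..(1/2 : ℝ), t * lswU t := by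
    apply intervalIntegral.integral_congr
    intro t ht
    rw [uIcc_of_le (by norm_num)] at ht
    simp only [lswU, indicator_of_mem ht, lswP]
  obtain ⟨B, hB0, hB⟩ := lswU_bdd
  rw [e]
  apply intervalIntegral.intervalIntegral_pos_of_pos_on
  · apply intervalIntegrable_of_bdd (measurable_id.mul lswU_measurable) (by norm_num) (C := B)
    intro x hx
    simp only [Pi.mul_apply, id]
    rw [abs_of_nonneg (mul_nonneg hx.1 (lswU_nonneg x))]
    nlinarith [hx.1, hx.2, lswU_nonneg x, hB x]
  · intro x hx
    have : x ∈ Icc (0:ℝ) (1/2) := ⟨hx.1.le, hx.2.le⟩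
    simp only [lswU, indicator_of_mem this]
    exact mul_pos hx.1 (lswP_pos x)
  · norm_num

lemma PhiLSW_eq {z : ℝ} (hz : 0 ≤ z) : PhiLSW z = lswU z / lswN := by
  unfold PhiLSW lswU lswN
  split_ifs with h
  · rw [indicator_of_mem (show z ∈ Icc (0:ℝ) (1/2) from ⟨hz, h⟩)]; rfl
  · rw [indicator_of_notMem (fun h' : z ∈ Icc (0:ℝ) (1/2) => h h'.2), zero_div]

lemma conv_eq {z : ℝ} (hz : 0 ≤ z) :
    conv PhiLSW PhiLSW z = (1/2) / lswN ^ 2 * ∫ y in (0:ℝ)..z, lswU (z - y) * lswU y := by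
  unfold conv
  rw [← intervalIntegral.integral_const_mul, ← intervalIntegral.integral_const_mul]
  apply intervalIntegral.integral_congr
  intro y hy
  rw [uIcc_of_le hz] at hy
  simp only
  rw [PhiLSW_eq hy.1, PhiLSW_eq (sub_nonneg.2 hy.2)]
  have := lswN_pos.ne'
  field_simp

/-- The self-convolution of the LSW profile is nonnegative and bounded on `[0,1]`, bounded away
from zero on `[5/8, 3/4]`, and vanishes on `[1,∞)`. -/
lemma conv_props : ∃ H m : ℝ, 0 ≤ H ∧ 0 < m ∧
    (∀ z ∈ Icc (0:ℝ) 1, 0 ≤ conv PhiLSW PhiLSW z ∧ conv PhiLSW PhiLSW z ≤ H) ∧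
    (∀ z ∈ Icc (5/8:ℝ) (3/4), m ≤ conv PhiLSW PhiLSW z) ∧
    (∀ z ∈ Ici (1:ℝ), conv PhiLSW PhiLSW z = 0) := by
  obtain ⟨B, hB0, hB⟩ := lswU_bdd
  have hN := lswN_pos
  obtain ⟨x₀, hx₀, hmin⟩ := isCompact_Icc.exists_isMinOn (nonempty_Icc.2 (by norm_num))
    (lswP_continuousOn_Icc (t := 7/16) (by norm_num) (by norm_num))
  set q := lswP x₀
  have hq0 : 0 < q := lswP_pos x₀
  have hq : ∀ z ∈ Icc (0:ℝ) (7/16), q ≤ lswU z := by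
    intro z hz
    have h : z ∈ Icc (0:ℝ) (1/2) := ⟨hz.1, by linarith [hz.2]⟩
    rw [lswU, indicator_of_mem h]
    exact hmin hz
  have hnn : ∀ z y, 0 ≤ lswU (z - y) * lswU y := fun z y =>
    mul_nonneg (lswU_nonneg _) (lswU_nonneg _)
  have hle : ∀ z y, lswU (z - y) * lswU y ≤ B * B := fun z y =>
    mul_le_mul (hB _) (hB _) (lswU_nonneg _) hB0
  have hi : ∀ z u v : ℝ, u ≤ v →
      IntervalIntegrable (fun y => lswU (z - y) * lswU y) volume u v := by
    intro z u v huv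
    refine intervalIntegrable_of_bdd
      ((lswU_measurable.comp (measurable_const.sub measurable_id)).mul lswU_measurable) huv
      (C := B * B) fun y _ => ?_
    change |lswU (z - y) * lswU y| ≤ B * B
    rw [abs_of_nonneg (hnn z y)]
    exact hle z y
  refine ⟨(1/2) / lswN ^ 2 * (B * B), (1/2) / lswN ^ 2 * ((1/8) * (q * q)), by positivity,
    by positivity, ?_, ?_, ?_⟩
  · intro z hz
    rw [conv_eq hz.1]
    refine ⟨mul_nonneg (by positivity)
      (intervalIntegral.integral_nonneg hz.1 fun y _ => hnn z y), ?_⟩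
    apply mul_le_mul_of_nonneg_left _ (by positivity)
    have := intervalIntegral.integral_mono_on hz.1 (hi z 0 z hz.1)
      (intervalIntegrable_const (c := B * B)) fun y _ => hle z y
    rw [intervalIntegral.integral_const, smul_eq_mul] at this
    nlinarith [hz.2, mul_nonneg hB0 hB0]
  · intro z hz
    have hz0 : 0 ≤ z := by linarith [hz.1]
    rw [conv_eq hz0]
    apply mul_le_mul_of_nonneg_left _ (by positivity)
    have h1 : ∫ y in (5/16:ℝ)..(7/16), lswU (z - y) * lswU y ≤
        ∫ y in (0:ℝ)..z, lswU (z - y) * lswU y :=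
      intervalIntegral.integral_mono_interval (by norm_num) (by norm_num) (by linarith [hz.1])
        (Eventually.of_forall fun y => hnn z y) (hi z 0 z hz0)
    have h2 := intervalIntegral.integral_mono_on (by norm_num : (5/16:ℝ) ≤ 7/16)
      (intervalIntegrable_const (c := q * q)) (hi z _ _ (by norm_num)) fun y hy =>
        mul_le_mul (hq (z - y) ⟨by linarith [hz.1, hy.2], by linarith [hz.2, hy.1]⟩)
          (hq y ⟨by linarith [hy.1], hy.2⟩) hq0.le (lswU_nonneg _)
    rw [intervalIntegral.integral_const, smul_eq_mul] at h2
    linarith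
  · intro z hz
    have hz1 : (1:ℝ) ≤ z := hz
    rw [conv_eq (by linarith)]
    -- For `z = 1` the integrand can be nonzero at the single point `y = 1/2`.
    have : ∫ y in (0:ℝ)..z, lswU (z - y) * lswU y = 0 := by
      apply intervalIntegral.integral_zero_ae
      filter_upwards [(measure_singleton (1/2 : ℝ) : volume {(1/2:ℝ)} = 0) |> compl_mem_ae_iff.2]
        with y hy _
      have hy' : y ≠ 1/2 := hy
      rcases lt_or_gt_of_ne hy' with h | h
      · have : z - y ∉ Icc (0:ℝ) (1/2) := fun h' => by linarith [h'.2]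
        rw [lswU, indicator_of_notMem this, zero_mul]
      · have : y ∉ Icc (0:ℝ) (1/2) := fun h' => by linarith [h'.2]
        rw [mul_comm, lswU, indicator_of_notMem this, zero_mul]
    rw [this, mul_zero]

/-- Pointwise consequences of closeness in the norm of `Z`. Both suprema in the norm are over
bounded sets, because `h ∈ Z` and the convolution is bounded on `[0,1]` and zero beyond. -/
lemma normZ_bounds {β₁ β₂ μ : ℝ} (hβ₂ : 1 < β₂) {h : ℝ → ℝ} (hh : memZ β₁ β₂ h)
    (hn : normZ β₁ β₂ (fun z => h z - conv PhiLSW PhiLSW z) ≤ μ) :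
    (∀ z ∈ Icc (0:ℝ) 1, |h z - conv PhiLSW PhiLSW z| ≤ μ) ∧
    (∀ z ∈ Ici (1:ℝ), |h z| ≤ μ * Real.exp (-β₁ * z)) := by
  obtain ⟨H, m, hH0, _, hH, _, hz0⟩ := conv_props
  obtain ⟨_, ⟨M₁, hM₁⟩, ⟨M₂, hM₂⟩⟩ := hh
  set f : ℝ → ℝ := fun z => h z - conv PhiLSW PhiLSW z with hf
  have b1 : BddAbove ((fun z => |f z|) '' Icc (0:ℝ) 1) := by
    refine ⟨M₁ + H, ?_⟩
    rintro _ ⟨z, hz, rfl⟩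
    have e1 : |h z| ≤ M₁ := hM₁ ⟨z, hz, rfl⟩
    have e2 := hH z hz
    refine (abs_sub _ _).trans ?_
    rw [abs_of_nonneg e2.1]
    linarith
  have b2 : BddAbove ((fun z => |f z| * Real.exp (β₁ * z) * z ^ β₂) '' Ici (1:ℝ)) := by
    refine ⟨M₂, ?_⟩
    rintro _ ⟨z, hz, rfl⟩
    have e1 : |h z| * Real.exp (β₁ * z) * z ^ β₂ ≤ M₂ := hM₂ ⟨z, hz, rfl⟩
    simpa [hf, hz0 z hz] using e1
  have n1 : 0 ≤ normSup f := Real.sSup_nonneg (by rintro _ ⟨z, _, rfl⟩; exact abs_nonneg _)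
  have n2 : 0 ≤ normTail β₁ β₂ f := Real.sSup_nonneg (by
    rintro _ ⟨z, hz, rfl⟩
    have : (0:ℝ) ≤ z := zero_le_one.trans hz
    positivity)
  unfold normZ at hn
  constructor
  · intro z hz
    have : |f z| ≤ normSup f := le_csSup b1 ⟨z, hz, rfl⟩
    linarith
  · intro z hz
    have hz1 : (1:ℝ) ≤ z := hz
    have e1 : |f z| * Real.exp (β₁ * z) * z ^ β₂ ≤ normTail β₁ β₂ f := le_csSup b2 ⟨z, hz, rfl⟩
    have e2 : f z = h z := by simp [hf, hz0 z hz]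
    rw [e2] at e1
    have e3 : 1 ≤ z ^ β₂ := Real.one_le_rpow hz1 (by linarith)
    have e4 : |h z| * Real.exp (β₁ * z) ≤ μ := by
      have := le_mul_of_one_le_right (by positivity : 0 ≤ |h z| * Real.exp (β₁ * z)) e3
      linarith
    rw [neg_mul, Real.exp_neg, ← div_eq_mul_inv, le_div_iff₀ (Real.exp_pos _)]
    exact e4

/-! ### Comparison of the functionals -/

lemma Ghat_eq {δ : ℝ} (hδ : 0 < δ) (i : ℕ) (h : ℝ → ℝ) :
    Ghat i δ h = ∫ ξ in (0:ℝ)..1, ξ * h ξ * Fw i δ 0 0 ξ := by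
  apply intervalIntegral.integral_congr
  intro ξ hξ
  rw [uIcc_of_le zero_le_one] at hξ
  simp only [GamHat]
  rw [← aF_mul_Gam hδ i 0 0 hξ.1]; ring

lemma Gfull_eq {δ : ℝ} (hδ : 0 < δ) (i : ℕ) (ε εt : ℝ) (h : ℝ → ℝ) :
    Gfull i δ ε εt h = ∫ ξ in Ioi (0:ℝ), ξ * h ξ * Fw i δ ε εt ξ := by
  apply setIntegral_congr_fun measurableSet_Ioi
  intro ξ hξ
  have hξ0 : 0 < ξ := hξ
  simp only
  rw [← aF_mul_Gam hδ i ε εt hξ0.le]; ring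

/-- The two-sided estimate behind the theorem. With `Q = F_i(5/8)`, all weights on `[0,1]` are at
most `C Q`; the difference of the functionals is bounded by `Q` times a small constant, and
`Ĝ_i` is bounded below by `Q` times a fixed one. -/
lemma key_estimate {β₁ H m C T σ μ δ ε εt : ℝ} (hβ₁ : 0 < β₁) (hm : 0 < m) (hH : 0 ≤ H)
    (hC : C = 20000 * (8/5) ^ (400:ℝ))
    (hT : T = ∫ ξ in Ioi (1:ℝ), ξ ^ (402:ℝ) * Real.exp (-β₁ * ξ))
    (hμ : 0 ≤ μ) (hσ : 0 ≤ σ) (hδ : 0 < δ) (hδ' : δ ≤ 1)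
    (hε : ε ∈ Icc (0:ℝ) (σ * Real.sqrt δ)) (hεt : εt ∈ Icc (0:ℝ) (σ * Real.sqrt δ))
    {h : ℝ → ℝ} (hmeas : Measurable h)
    (h1 : ∀ z ∈ Icc (0:ℝ) 1, -μ ≤ h z ∧ h z ≤ H + μ)
    (h2 : ∀ z ∈ Icc (5/8:ℝ) (3/4), m - μ ≤ h z)
    (h3 : ∀ z ∈ Ici (1:ℝ), |h z| ≤ μ * Real.exp (-β₁ * z)) (i : ℕ) :
    |Gfull i δ ε εt h - Ghat i δ h| ≤
        (256 * Real.pi * σ * (H + μ) * C + μ * C * T) * Fw i δ 0 0 (5/8) ∧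
      (5/64 * m - μ * C) * Fw i δ 0 0 (5/8) ≤ Ghat i δ h := by
  have hC0 : 0 < C := by rw [hC]; positivity
  have hQ0 : 0 < Fw i δ 0 0 (5/8) := by linarith [Fw_base_ge hδ hδ' i]
  have hgrow : ∀ ξ : ℝ, 5/8 ≤ ξ → Fw i δ 0 0 ξ ≤ C * ξ ^ (401:ℝ) * Fw i δ 0 0 (5/8) :=
    fun ξ hξ => by rw [hC]; exact Fw_growth hδ hδ' i hξ
  set Q := Fw i δ 0 0 (5/8) with hQ
  have hF1 : ∀ ξ ∈ Icc (0:ℝ) 1, Fw i δ 0 0 ξ ≤ C * Q := fun ξ hξ => by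
    have := hgrow 1 (by norm_num)
    rw [Real.one_rpow, mul_one] at this
    exact (Fw_mono hδ i hξ.1 hξ.2).trans this
  have habs : ∀ z ∈ Icc (0:ℝ) 1, |h z| ≤ H + μ := fun z hz =>
    abs_le.2 ⟨by linarith [(h1 z hz).1], (h1 z hz).2⟩
  have hFm : ∀ a b : ℝ, Measurable fun ξ => ξ * h ξ * Fw i δ a b ξ := fun a b =>
    (measurable_id.mul hmeas).mul (Fw_continuous hδ i a b).measurable
  have hFbd : ∀ a b : ℝ, 0 ≤ a → 0 ≤ b → ∀ ξ ∈ Icc (0:ℝ) 1,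
      |ξ * h ξ * Fw i δ a b ξ| ≤ (H + μ) * (C * Q) := by
    intro a b ha hb ξ hξ
    rw [abs_mul, abs_mul, abs_of_nonneg hξ.1, abs_of_nonneg (Fw_nonneg hδ i a b hξ.1)]
    have e1 : ξ * |h ξ| ≤ H + μ :=
      (mul_le_of_le_one_left (abs_nonneg _) hξ.2).trans (habs ξ hξ)
    exact mul_le_mul e1 ((Fw_le hδ i ha hb hξ.1).trans (hF1 ξ hξ)) (Fw_nonneg hδ i a b hξ.1)
      (by linarith)
  have hI : ∀ a b : ℝ, 0 ≤ a → 0 ≤ b →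
      IntervalIntegrable (fun ξ => ξ * h ξ * Fw i δ a b ξ) volume 0 1 := fun a b ha hb =>
    intervalIntegrable_of_bdd (hFm a b) zero_le_one (hFbd a b ha hb)
  constructor
  · -- The tail over `(1, ∞)` is dominated by an integrable polynomial times an exponential.
    have hdomI : IntegrableOn (fun ξ : ℝ => ξ ^ (402:ℝ) * Real.exp (-β₁ * ξ)) (Ioi 1) := by
      have := integrableOn_rpow_mul_exp_neg_mul_rpow (p := 1) (s := 402) (b := β₁)
        (by norm_num) one_pos hβ₁
      simp only [Real.rpow_one] at this
      exact this.mono_set (Ioi_subset_Ioi zero_le_one)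
    have hdom : ∀ ξ ∈ Ioi (1:ℝ), ‖ξ * h ξ * Fw i δ ε εt ξ‖ ≤
        μ * C * Q * (ξ ^ (402:ℝ) * Real.exp (-β₁ * ξ)) := by
      intro ξ hξ
      have hξ1 : (1:ℝ) < ξ := hξ
      have hξ0 : 0 < ξ := by linarith
      have e1 := (Fw_le hδ i hε.1 hεt.1 hξ0.le).trans (hgrow ξ (by linarith))
      have e2 := h3 ξ hξ1.le
      rw [Real.norm_eq_abs, abs_mul, abs_mul, abs_of_pos hξ0,
        abs_of_nonneg (Fw_nonneg hδ i ε εt hξ0.le)]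
      calc ξ * |h ξ| * Fw i δ ε εt ξ
          ≤ ξ * (μ * Real.exp (-β₁ * ξ)) * (C * ξ ^ (401:ℝ) * Q) := by
            have := Fw_nonneg hδ i ε εt hξ0.le
            gcongr
        _ = μ * C * Q * ((ξ ^ (401:ℝ) * ξ) * Real.exp (-β₁ * ξ)) := by ring
        _ = _ := by rw [← Real.rpow_add_one hξ0.ne']; norm_num
    have hdom' : ∀ᵐ ξ ∂(volume.restrict (Ioi (1:ℝ))), ‖ξ * h ξ * Fw i δ ε εt ξ‖ ≤
        μ * C * Q * (ξ ^ (402:ℝ) * Real.exp (-β₁ * ξ)) :=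
      (ae_restrict_iff' measurableSet_Ioi).2 (Eventually.of_forall hdom)
    have htailI : IntegrableOn (fun ξ => ξ * h ξ * Fw i δ ε εt ξ) (Ioi 1) :=
      (hdomI.const_mul (μ * C * Q)).mono' (hFm ε εt).aestronglyMeasurable hdom'
    have htail := norm_integral_le_of_norm_le (hdomI.const_mul (μ * C * Q)) hdom'
    rw [integral_const_mul, ← hT, Real.norm_eq_abs] at htail
    have hsplit : Gfull i δ ε εt h = (∫ ξ in (0:ℝ)..1, ξ * h ξ * Fw i δ ε εt ξ) +
        ∫ ξ in Ioi (1:ℝ), ξ * h ξ * Fw i δ ε εt ξ := by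
      rw [Gfull_eq hδ, intervalIntegral.integral_of_le zero_le_one,
        ← setIntegral_union (Ioc_disjoint_Ioi le_rfl) measurableSet_Ioi
          ((intervalIntegrable_iff_integrableOn_Ioc_of_le zero_le_one).1 (hI ε εt hε.1 hεt.1))
          htailI, Ioc_union_Ioi_eq_Ioi zero_le_one]
    have hmid : |(∫ ξ in (0:ℝ)..1, ξ * h ξ * Fw i δ ε εt ξ) -
        ∫ ξ in (0:ℝ)..1, ξ * h ξ * Fw i δ 0 0 ξ| ≤ (H + μ) * (256 * Real.pi * σ * (C * Q)) := by
      rw [← intervalIntegral.integral_sub (hI ε εt hε.1 hεt.1) (hI 0 0 le_rfl le_rfl)]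
      have := intervalIntegral.norm_integral_le_of_norm_le_const (a := 0) (b := 1)
        (f := fun ξ => ξ * h ξ * Fw i δ ε εt ξ - ξ * h ξ * Fw i δ 0 0 ξ)
        (C := (H + μ) * (256 * Real.pi * σ * (C * Q))) (by
          intro ξ hξ
          rw [uIoc_of_le zero_le_one] at hξ
          have hξ' : ξ ∈ Icc (0:ℝ) 1 := ⟨hξ.1.le, hξ.2⟩
          have e0 : |Fw i δ ε εt ξ - Fw i δ 0 0 ξ| ≤ 256 * Real.pi * σ * (C * Q) := by
            have g1 := Fw_le hδ i hε.1 hεt.1 hξ'.1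
            have g2 := Fw_ge hδ hδ' i hε hεt hξ'.1 hξ'.2
            have g3 := mul_le_mul_of_nonneg_left (hF1 ξ hξ')
              (by positivity : 0 ≤ 256 * Real.pi * σ)
            rw [abs_of_nonpos (by linarith)]
            linarith
          have e1 : ξ * |h ξ| ≤ H + μ :=
            (mul_le_of_le_one_left (abs_nonneg _) hξ'.2).trans (habs ξ hξ')
          rw [← mul_sub, Real.norm_eq_abs, abs_mul, abs_mul, abs_of_nonneg hξ'.1]
          exact mul_le_mul e1 e0 (abs_nonneg _) (by linarith))
      simpa using this
    rw [hsplit, Ghat_eq hδ]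
    have e := abs_add_le ((∫ ξ in (0:ℝ)..1, ξ * h ξ * Fw i δ ε εt ξ) -
        ∫ ξ in (0:ℝ)..1, ξ * h ξ * Fw i δ 0 0 ξ) (∫ ξ in Ioi (1:ℝ), ξ * h ξ * Fw i δ ε εt ξ)
    rw [add_sub_right_comm]
    refine e.trans ?_
    linarith
  · rw [Ghat_eq hδ]
    have hI0 := hI 0 0 le_rfl le_rfl
    have hJ : IntervalIntegrable (fun ξ => ξ * h ξ * Fw i δ 0 0 ξ + μ * (C * Q)) volume 0 1 :=
      hI0.add intervalIntegrable_const
    have hlow : ∀ ξ ∈ Icc (0:ℝ) 1, ∀ c, 0 ≤ c → c - μ ≤ h ξ →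
        ξ * c * Fw i δ 0 0 ξ ≤ ξ * h ξ * Fw i δ 0 0 ξ + μ * (C * Q) := by
      intro ξ hξ c hc hcξ
      have e1 := hF1 ξ hξ
      have e2 := Fw_nonneg hδ i 0 0 hξ.1
      have e3 : ξ * (c - μ) * Fw i δ 0 0 ξ ≤ ξ * h ξ * Fw i δ 0 0 ξ :=
        mul_le_mul_of_nonneg_right (mul_le_mul_of_nonneg_left hcξ hξ.1) e2
      have e4 : ξ * Fw i δ 0 0 ξ ≤ C * Q := (mul_le_of_le_one_left e2 hξ.2).trans e1
      have e5 := mul_le_mul_of_nonneg_left e4 hμ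
      linarith
    have k1 : ∫ ξ in (5/8:ℝ)..(3/4), (ξ * h ξ * Fw i δ 0 0 ξ + μ * (C * Q)) ≤
        ∫ ξ in (0:ℝ)..1, (ξ * h ξ * Fw i δ 0 0 ξ + μ * (C * Q)) := by
      apply intervalIntegral.integral_mono_interval (by norm_num) (by norm_num) (by norm_num)
        _ hJ
      refine (ae_restrict_iff' measurableSet_Ioc).2 (Eventually.of_forall fun ξ hξ => ?_)
      have hξ' : ξ ∈ Icc (0:ℝ) 1 := ⟨hξ.1.le, hξ.2⟩
      have := hlow ξ hξ' 0 le_rfl (by linarith [(h1 ξ hξ').1])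
      simpa using this
    have k2 := intervalIntegral.integral_mono_on (by norm_num : (5/8:ℝ) ≤ 3/4)
      (intervalIntegrable_const (c := 5/8 * m * Q)) (hJ.mono_set (by
        rw [uIcc_of_le (by norm_num), uIcc_of_le (by norm_num)]
        exact Icc_subset_Icc (by norm_num) (by norm_num))) fun ξ hξ => by
          have hξ' : ξ ∈ Icc (0:ℝ) 1 := ⟨by linarith [hξ.1], by linarith [hξ.2]⟩
          refine le_trans ?_ (hlow ξ hξ' m hm.le (h2 ξ hξ))
          exact mul_le_mul (mul_le_mul_of_nonneg_right hξ.1 hm.le)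
            (Fw_mono hδ i (by norm_num) hξ.1) hQ0.le (mul_nonneg hξ'.1 hm.le)
    rw [intervalIntegral.integral_const, smul_eq_mul] at k2
    rw [intervalIntegral.integral_add hI0 intervalIntegrable_const,
      intervalIntegral.integral_const, smul_eq_mul] at k1
    linarith

/-- G_i approximates Ĝ_i for small parameters. -/
theorem stmt16 (β₁ β₂ : ℝ) (hβ₁ : 0 < β₁) (hβ₂ : 1 < β₂) :
    ∀ η : ℝ, 0 < η → ∃ δ₀ σ μ : ℝ, 0 < δ₀ ∧ 0 < σ ∧ 0 < μ ∧
      ∀ δ ∈ Ioc (0:ℝ) δ₀,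
        ∀ ε ∈ Icc (0:ℝ) (σ * Real.sqrt δ), ∀ εt ∈ Icc (0:ℝ) (σ * Real.sqrt δ),
          ∀ h : ℝ → ℝ, memZ β₁ β₂ h →
            normZ β₁ β₂ (fun z => h z - conv PhiLSW PhiLSW z) ≤ μ →
            ∀ i ∈ ({1, 2} : Set ℕ),
              |Gfull i δ ε εt h - Ghat i δ h| ≤ η * Ghat i δ h := by
  intro η hη
  obtain ⟨H, m, hH, hm, hc1, hc2, -⟩ := conv_props
  obtain ⟨C, hC⟩ : ∃ C : ℝ, C = 20000 * (8/5) ^ (400:ℝ) := ⟨_, rfl⟩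
  have hC0 : 0 < C := by rw [hC]; positivity
  obtain ⟨T, hT⟩ : ∃ T : ℝ, T = ∫ ξ in Ioi (1:ℝ), ξ ^ (402:ℝ) * Real.exp (-β₁ * ξ) := ⟨_, rfl⟩
  have hT0 : 0 ≤ T := by
    rw [hT]
    refine setIntegral_nonneg measurableSet_Ioi fun ξ hξ => ?_
    have : (0:ℝ) < ξ := zero_lt_one.trans hξ
    positivity
  have hpi := Real.pi_pos
  -- `c₀` is the constant in the lower bound for `Ĝ_i` before the `μ`-loss.
  obtain ⟨c₀, hc₀⟩ : ∃ c₀ : ℝ, c₀ = 5/64 * m := ⟨_, rfl⟩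
  have hc₀0 : 0 < c₀ := by rw [hc₀]; positivity
  obtain ⟨μ, hμ0, hμ1, hμ2, hμ3⟩ : ∃ μ : ℝ, 0 < μ ∧ μ ≤ 1 ∧ μ ≤ c₀ / (2 * C) ∧
      μ ≤ η * c₀ / (4 * (C * (T + 1))) :=
    ⟨min 1 (min (c₀ / (2 * C)) (η * c₀ / (4 * (C * (T + 1))))), by positivity,
      min_le_left _ _, (min_le_right _ _).trans (min_le_left _ _),
      (min_le_right _ _).trans (min_le_right _ _)⟩
  have hμC : μ * C ≤ c₀ / 2 := by
    rw [le_div_iff₀ (by positivity)] at hμ2; linarith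
  have hμT : μ * C * T ≤ η * c₀ / 4 := by
    rw [le_div_iff₀ (by positivity)] at hμ3
    have : 0 ≤ μ * C := by positivity
    linarith
  refine ⟨1, η * c₀ / (4 * (256 * Real.pi * (H + 1) * C)), μ, one_pos, by positivity, hμ0, ?_⟩
  intro δ hδ ε hε εt hεt h hh hn i _
  obtain ⟨n1, n2⟩ := normZ_bounds hβ₂ hh hn
  have hσ0 : 0 ≤ η * c₀ / (4 * (256 * Real.pi * (H + 1) * C)) := by positivity
  obtain ⟨e1, e2⟩ := key_estimate hβ₁ hm hH hC hT hμ0.le hσ0 hδ.1 hδ.2 hε hεt hh.1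
    (fun z hz => by
      have := abs_le.1 (n1 z hz)
      have := hc1 z hz
      constructor <;> linarith)
    (fun z hz => by
      have := abs_le.1 (n1 z ⟨by linarith [hz.1], by linarith [hz.2]⟩)
      have := hc2 z hz
      linarith) n2 i
  have hQ0 : 0 < Fw i δ 0 0 (5/8) := by linarith [Fw_base_ge hδ.1 hδ.2 i]
  rw [← hc₀] at e2
  have hσ : 256 * Real.pi * (η * c₀ / (4 * (256 * Real.pi * (H + 1) * C))) * (H + μ) * C ≤
      η * c₀ / 4 := by
    calc _ ≤ 256 * Real.pi * (η * c₀ / (4 * (256 * Real.pi * (H + 1) * C))) * (H + 1) * C := by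
          gcongr
      _ = η * c₀ / 4 := by field_simp
  calc _ ≤ _ := e1
    _ ≤ (η * (c₀ - μ * C)) * Fw i δ 0 0 (5/8) := by
        apply mul_le_mul_of_nonneg_right _ hQ0.le
        have := mul_le_mul_of_nonneg_left (by linarith : c₀ / 2 ≤ c₀ - μ * C) hη.le
        linarith
    _ ≤ _ := by
        rw [mul_assoc]
        exact mul_le_mul_of_nonneg_left e2 hη.le
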